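/- Let g ≥ 2 and b > 1 be integers with gcd(b,g) = 1, let a be a positive integer with gcd(a,b) = 1, and let j ≥ 1. Then for every s ∈ {0,…,g^j−1}, the relative frequency ν_k(s)/ord_g(b^k) of the j-word s in the enlarged repetend of a/b^k converges to 1/g^j as k → ∞. -/

import Mathlib

/-- `ordg g m = min {n ≥ 1 : g^n ≡ 1 (mod m)}`, the multiplicative order of `g` modulo `m`. -/
noncomputable def ordg (g m : ℕ) : ℕ := sInf {n : ℕ | 0 < n ∧ g ^ n ≡ 1 [MOD m]}

/-- `nu g b a j k s` is the absolute frequency of the `j`-word `s` in the enlarged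
repetend of `a/b^k`. -/
noncomputable def nu (g b a j k s : ℕ) : ℕ :=
  ((Finset.Icc j (ordg g (b ^ k) + j - 1)).filter
    (fun i => (a * g ^ i / b ^ k) % g ^ j = s)).card

theorem ordg_eq_orderOf {g m : ℕ} (hm : 0 < m) (hgm : Nat.Coprime g m) :
    ordg g m = orderOf (g : ZMod m) := by
  have key : ∀ n : ℕ, g ^ n ≡ 1 [MOD m] ↔ (g : ZMod m) ^ n = 1 := fun n => by
    rw [← ZMod.natCast_eq_natCast_iff]
    push_cast
    rfl
  have hne : {n : ℕ | 0 < n ∧ g ^ n ≡ 1 [MOD m]}.Nonempty :=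
    ⟨m.totient, Nat.totient_pos.2 hm, Nat.ModEq.pow_totient hgm⟩
  obtain ⟨hpos, hpow⟩ := Nat.sInf_mem hne
  have hfin : IsOfFinOrder (g : ZMod m) :=
    isOfFinOrder_iff_pow_eq_one.2 ⟨_, hpos, (key _).1 hpow⟩
  exact le_antisymm (Nat.sInf_le ⟨hfin.orderOf_pos, (key _).2 (pow_orderOf_eq_one _)⟩)
    (orderOf_le_of_pow_eq_one hpos ((key _).1 hpow))

theorem ordg_pos {g m : ℕ} (hm : 0 < m) (hgm : Nat.Coprime g m) : 0 < ordg g m :=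
  (Nat.sInf_mem (s := {n : ℕ | 0 < n ∧ g ^ n ≡ 1 [MOD m]})
    ⟨m.totient, Nat.totient_pos.2 hm, Nat.ModEq.pow_totient hgm⟩).1

theorem pow_ordg_modEq {g m : ℕ} (hm : 0 < m) (hgm : Nat.Coprime g m) :
    g ^ ordg g m ≡ 1 [MOD m] :=
  (Nat.sInf_mem (s := {n : ℕ | 0 < n ∧ g ^ n ≡ 1 [MOD m]})
    ⟨m.totient, Nat.totient_pos.2 hm, Nat.ModEq.pow_totient hgm⟩).2

/-- Lifting the exponent: if `x ≡ 1` modulo `b²`, then `b ^ k ∣ x ^ n - 1` forces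
`b ^ k ∣ (x - 1) * n`. -/
theorem pow_dvd_sub_one_mul {b k n x : ℕ} (hx : 1 ≤ x) (hbx : b ^ 2 ∣ x - 1)
    (h : b ^ k ∣ x ^ n - 1) : b ^ k ∣ (x - 1) * n := by
  rw [Nat.dvd_iff_prime_pow_dvd_dvd]
  intro p e hp hpe
  rcases Nat.eq_zero_or_pos e with rfl | he
  · simp
  have hpb : p ∣ b := hp.dvd_of_dvd_pow ((dvd_pow_self p he.ne').trans hpe)
  have hp2 : p ^ 2 ∣ x - 1 := (pow_dvd_pow_of_dvd hpb 2).trans hbx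
  have hpx1 : p ∣ x - 1 := (dvd_pow_self p two_ne_zero).trans hp2
  have hpx : ¬ p ∣ x := fun hd => hp.one_lt.ne' <| Nat.dvd_one.1 <| by
    have := Nat.dvd_sub hd hpx1
    rwa [Nat.sub_sub_self hx] at this
  have cast1 : ((x - 1 : ℕ) : ℤ) = (x : ℤ) - 1 := by push_cast [hx]; ring
  have cast2 : ((x ^ n - 1 : ℕ) : ℤ) = (x : ℤ) ^ n - 1 ^ n := by
    rw [Nat.cast_sub (Nat.one_le_pow _ _ hx)]
    simp
  have lte : emultiplicity (p : ℤ) ((x : ℤ) ^ n - 1 ^ n) =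
      emultiplicity (p : ℤ) ((x : ℤ) - 1) + emultiplicity (p : ℤ) (n : ℤ) := by
    rcases hp.eq_two_or_odd' with rfl | hodd
    · refine Int.two_pow_sub_pow' n ?_ (by exact_mod_cast hpx)
      rw [← cast1]
      exact_mod_cast hp2
    · rw [Int.natCast_emultiplicity]
      refine Int.emultiplicity_pow_sub_pow hp hodd ?_ (by exact_mod_cast hpx) n
      rw [← cast1]
      exact_mod_cast hpx1
  have h' : (p : ℤ) ^ e ∣ (x : ℤ) ^ n - 1 ^ n := by
    rw [← cast2]
    exact_mod_cast hpe.trans h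
  rw [pow_dvd_iff_le_emultiplicity, lte, ← emultiplicity_mul (Nat.prime_iff_prime_int.1 hp),
    ← pow_dvd_iff_le_emultiplicity, ← cast1] at h'
  exact_mod_cast h'

theorem pow_dvd_mul_ordg {g b : ℕ} (hg : 2 ≤ g) (hb : 1 < b) (hgb : Nat.Coprime g b) (k : ℕ) :
    b ^ k ∣ (g ^ (b ^ 2).totient - 1) * ordg g (b ^ k) := by
  have hb0 : 0 < b := by omega
  have hone : ∀ n, 1 ≤ g ^ n := fun n => Nat.one_le_pow _ _ (by omega)
  refine pow_dvd_sub_one_mul (hone _)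
    ((Nat.modEq_iff_dvd' (hone _)).1 (Nat.ModEq.pow_totient (hgb.pow_right 2)).symm) ?_
  rw [← pow_mul, mul_comm, pow_mul]
  refine (Nat.modEq_iff_dvd' (Nat.one_le_pow _ _ (hone _))).1 ?_
  simpa using ((pow_ordg_modEq (pow_pos hb0 k) (hgb.pow_right k)).pow (b ^ 2).totient).symm

theorem ordg_pow_succ_le {g b : ℕ} (hb : 1 < b) (hgb : Nat.Coprime g b) {k : ℕ} (hk : 1 ≤ k) :
    ordg g (b ^ (k + 1)) ≤ b * ordg g (b ^ k) := by
  have hb0 : 0 < b := by omega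
  refine Nat.sInf_le ⟨Nat.mul_pos hb0 (ordg_pos (pow_pos hb0 k) (hgb.pow_right k)), ?_⟩
  have h := pow_ordg_modEq (pow_pos hb0 k) (hgb.pow_right k)
  rw [mul_comm, pow_mul]
  generalize g ^ ordg g (b ^ k) = x at h ⊢
  have h1 : ((b ^ k : ℕ) : ℤ) ∣ (x : ℤ) - 1 := by
    simpa using (Nat.modEq_iff_dvd.1 h.symm)
  have hxb : (x : ℤ) ≡ 1 [ZMOD b] :=
    (Int.modEq_iff_dvd.2 ((dvd_trans (by exact_mod_cast dvd_pow_self b (by omega)) h1))).symm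
  have h2 : (b : ℤ) ∣ ∑ i ∈ Finset.range b, (x : ℤ) ^ i := by
    have hs : ∑ i ∈ Finset.range b, (x : ℤ) ^ i ≡ ∑ i ∈ Finset.range b, 1 [ZMOD b] :=
      Int.ModEq.sum fun i _ => by simpa using hxb.pow i
    rw [← Int.modEq_zero_iff_dvd]
    exact hs.trans (by simp)
  refine (Nat.modEq_iff_dvd.2 ?_).symm
  have := mul_dvd_mul h1 h2
  rw [mul_geom_sum] at this
  push_cast at this ⊢
  rwa [pow_succ]

/-- From some point on, the order modulo `b ^ k` is multiplied by `b` at each step. -/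
theorem exists_ordg_pow_add_eq {g b : ℕ} (hg : 2 ≤ g) (hb : 1 < b) (hgb : Nat.Coprime g b) :
    ∃ K, ∀ l, ordg g (b ^ (K + l)) = b ^ l * ordg g (b ^ K) := by
  have hb0 : 0 < b := by omega
  set C := g ^ (b ^ 2).totient - 1
  choose c hc using fun k => pow_dvd_mul_ordg hg hb hgb k
  have hC : 0 < C := Nat.sub_pos_of_lt
    (Nat.one_lt_pow (Nat.totient_pos.2 (pow_pos hb0 2)).ne' (by omega))
  have hstep : ∀ k, c (k + 1 + 1) ≤ c (k + 1) := fun k => by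
    refine Nat.le_of_mul_le_mul_left ?_ (pow_pos hb0 (k + 1 + 1))
    calc b ^ (k + 1 + 1) * c (k + 1 + 1) = C * ordg g (b ^ (k + 1 + 1)) := (hc _).symm
      _ ≤ C * (b * ordg g (b ^ (k + 1))) :=
        Nat.mul_le_mul_left _ (ordg_pow_succ_le hb hgb (by omega))
      _ = b * (C * ordg g (b ^ (k + 1))) := by ring
      _ = b ^ (k + 1 + 1) * c (k + 1) := by rw [hc]; ring
  have hanti : Antitone fun k => c (k + 1) := antitone_nat_of_succ_le hstep
  set K := Function.argmin fun k => c (k + 1)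
  refine ⟨K + 1, fun l => Nat.eq_of_mul_eq_mul_left hC ?_⟩
  have hcl : c (K + 1 + l) = c (K + 1) := by
    rw [add_right_comm]
    exact le_antisymm (hanti (Nat.le_add_right K l))
      (Function.argmin_le (fun k => c (k + 1)) (K + l))
  calc C * ordg g (b ^ (K + 1 + l)) = b ^ (K + 1 + l) * c (K + 1) := by rw [hc, hcl]
    _ = b ^ l * (C * ordg g (b ^ (K + 1))) := by rw [hc]; ring
    _ = C * (b ^ l * ordg g (b ^ (K + 1))) := by ring

/-- The least residues modulo `m` of the numbers `a * g ^ i`. -/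
noncomputable def powResidues (g a m : ℕ) : Finset ℕ :=
  (Finset.range (ordg g m)).image fun i => a * g ^ i % m

theorem injOn_mul_pow_mod {g a m : ℕ} (hm : 0 < m) (hgm : Nat.Coprime g m)
    (ham : Nat.Coprime a m) :
    Set.InjOn (fun i => a * g ^ i % m) (Finset.range (ordg g m)) := by
  intro i hi i' hi' h
  simp only [Finset.coe_range, Set.mem_Iio, ordg_eq_orderOf hm hgm] at hi hi'
  refine pow_injOn_Iio_orderOf hi hi' ?_
  have h' : g ^ i ≡ g ^ i' [MOD m] := Nat.ModEq.cancel_left_of_coprime (c := a) ham.symm h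
  simpa using (ZMod.natCast_eq_natCast_iff _ _ _).2 h'

theorem card_powResidues {g a m : ℕ} (hm : 0 < m) (hgm : Nat.Coprime g m)
    (ham : Nat.Coprime a m) : (powResidues g a m).card = ordg g m := by
  rw [powResidues, Finset.card_image_of_injOn (injOn_mul_pow_mod hm hgm ham), Finset.card_range]

theorem mul_pow_mod_mem_powResidues {g a m : ℕ} (hm : 0 < m) (hgm : Nat.Coprime g m) (i : ℕ) :
    a * g ^ i % m ∈ powResidues g a m := by
  refine Finset.mem_image.2 ⟨i % ordg g m, Finset.mem_range.2 (Nat.mod_lt _ (ordg_pos hm hgm)), ?_⟩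
  refine Nat.ModEq.mul_left a ((ZMod.natCast_eq_natCast_iff _ _ _).1 ?_)
  push_cast
  rw [ordg_eq_orderOf hm hgm, pow_mod_orderOf]

theorem mul_pow_div_mod_eq {g a M : ℕ} (hg : 0 < g) (hM : 0 < M) (i j : ℕ) :
    a * g ^ (i + j) / M % g ^ j = g ^ j * (a * g ^ i % M) / M := by
  have h : a * g ^ (i + j) = g ^ j * (a * g ^ i % M) + M * (a * g ^ i / M * g ^ j) := by
    calc a * g ^ (i + j) = g ^ j * (a * g ^ i) := by ring
      _ = g ^ j * (a * g ^ i % M + M * (a * g ^ i / M)) := by rw [Nat.mod_add_div]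
      _ = _ := by ring
  rw [h, Nat.add_mul_div_left _ _ hM, Nat.add_mul_mod_self_right]
  refine Nat.mod_eq_of_lt ((Nat.div_lt_iff_lt_mul hM).2 ?_)
  exact Nat.mul_lt_mul_of_pos_left (Nat.mod_lt _ hM) (pow_pos hg j)

theorem nu_eq_card_filter_powResidues {g b a : ℕ} (hg : 0 < g) (hb : 0 < b)
    (hgb : Nat.Coprime g b) (hab : Nat.Coprime a b) (j k s : ℕ) :
    nu g b a j k s =
      ((powResidues g a (b ^ k)).filter fun r => g ^ j * r / b ^ k = s).card := by
  have hM := pow_pos hb k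
  have hn := ordg_pos hM (hgb.pow_right k)
  have hIcc : Finset.Icc j (ordg g (b ^ k) + j - 1) =
      (Finset.range (ordg g (b ^ k))).map (addRightEmbedding j) := by
    ext i
    simp only [Finset.mem_Icc, Finset.mem_map, Finset.mem_range, addRightEmbedding_apply]
    constructor
    · intro h
      exact ⟨i - j, by omega, by omega⟩
    · rintro ⟨i, h, rfl⟩
      omega
  rw [nu, hIcc, Finset.filter_map, Finset.card_map, powResidues, Finset.filter_image,
    Finset.card_image_of_injOn]
  · congr 1
    refine Finset.filter_congr fun i _ => ?_
    simp [mul_pow_div_mod_eq hg hM]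
  · exact (injOn_mul_pow_mod hM (hgb.pow_right k) (hab.pow_right k)).mono
      (by exact_mod_cast Finset.filter_subset _ _)

theorem card_filter_mod_eq {m q c : ℕ} (hm : 0 < m) (hc : c < m) :
    ((Finset.range (m * q)).filter fun r => r % m = c).card = q := by
  have h := Nat.count_modEq_card (m * q) hm c
  rw [Nat.count_eq_card_filter_range] at h
  simpa [Nat.ModEq, Nat.mod_eq_of_lt hc, hm] using h

/-- If the order grows by the largest possible factor `q` from `m` to `m * q`, the residues modulo
`m * q` are all the lifts of those modulo `m`. -/
theorem powResidues_mul_eq {g a m q : ℕ} (hm : 0 < m) (hq : 0 < q)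
    (hg : Nat.Coprime g (m * q)) (ha : Nat.Coprime a (m * q))
    (hord : ordg g (m * q) = q * ordg g m) :
    powResidues g a (m * q) =
      (Finset.range (m * q)).filter fun r => r % m ∈ powResidues g a m := by
  have hM := Nat.mul_pos hm hq
  have hgm : Nat.Coprime g m := hg.coprime_dvd_right (Nat.dvd_mul_right _ _)
  have ham : Nat.Coprime a m := ha.coprime_dvd_right (Nat.dvd_mul_right _ _)
  refine Finset.eq_of_subset_of_card_le (fun r hr => ?_) ?_
  · obtain ⟨i, -, rfl⟩ := Finset.mem_image.1 hr
    rw [Finset.mem_filter, Finset.mem_range, Nat.mod_mod_of_dvd _ (Nat.dvd_mul_right _ _)]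
    exact ⟨Nat.mod_lt _ hM, mul_pow_mod_mem_powResidues hm hgm i⟩
  · rw [card_powResidues hM hg ha, hord, Finset.card_eq_sum_card_fiberwise
      (f := fun r => r % m) (t := powResidues g a m) ?_]
    swap
    · exact fun r hr => (Finset.mem_filter.1 hr).2
    refine (Finset.sum_le_card_nsmul _ _ q fun c hc => ?_).trans_eq
      (by rw [card_powResidues hm hgm ham, smul_eq_mul, mul_comm])
    have hcm : c < m := by
      obtain ⟨i, -, rfl⟩ := Finset.mem_image.1 hc
      exact Nat.mod_lt _ hm
    exact (Finset.card_le_card (Finset.filter_subset_filter _ (Finset.filter_subset _ _))).trans_eq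
      (card_filter_mod_eq hm hcm)

theorem abs_card_filter_mod_sub_le {m q G c s : ℕ} (hm : 0 < m) (hq : 0 < q) (hG : 0 < G)
    (hc : c < m) (hs : s < G) :
    |((((Finset.range (m * q)).filter fun r => r % m = c ∧ G * r / (m * q) = s).card : ℕ) : ℚ)
      - (q : ℚ) / G| ≤ 2 := by
  have hm1 : (1 : ℚ) ≤ m := by exact_mod_cast hm
  have hm0 : (0 : ℚ) < m := by exact_mod_cast hm
  have hG0 : (0 : ℚ) < G := by exact_mod_cast hG
  have hM : 0 < m * q := Nat.mul_pos hm hq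
  set x : ℚ := s * (m * q : ℕ) / G with hx
  set y : ℚ := (s + 1) * (m * q : ℕ) / G with hy
  have hset : ((Finset.range (m * q)).filter fun r => r % m = c ∧ G * r / (m * q) = s) =
      (Finset.Ico ⌈x⌉₊ ⌈y⌉₊).filter fun r => r ≡ c [MOD m] := by
    ext r
    have h1 : ⌈x⌉₊ ≤ r ↔ s * (m * q) ≤ G * r := by
      rw [Nat.ceil_le, hx, div_le_iff₀ hG0, mul_comm G r]
      exact_mod_cast Iff.rfl
    have h2 : r < ⌈y⌉₊ ↔ G * r < (s + 1) * (m * q) := by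
      rw [Nat.lt_ceil, hy, lt_div_iff₀ hG0, mul_comm G r]
      exact_mod_cast Iff.rfl
    have h3 : G * r < (s + 1) * (m * q) → r < m * q := fun h =>
      Nat.lt_of_mul_lt_mul_left (h.trans_le (Nat.mul_le_mul_right _ hs))
    have h4 : G * r / (m * q) = s ↔ s * (m * q) ≤ G * r ∧ G * r < (s + 1) * (m * q) := by
      rw [← Nat.le_div_iff_mul_le hM, ← Nat.div_lt_iff_lt_mul hM]
      omega
    simp only [Finset.mem_filter, Finset.mem_range, Finset.mem_Ico, h1, h2, h4, Nat.ModEq,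
      Nat.mod_eq_of_lt hc]
    tauto
  have hx0 : 0 ≤ x := by positivity
  have hy0 : 0 ≤ y := by positivity
  have hxy : y = x + m * (q / G) := by
    rw [hx, hy]
    push_cast
    ring
  have hcard := Nat.Ico_filter_modEq_card ⌈x⌉₊ ⌈y⌉₊ hm c
  rw [hset, ← Int.cast_natCast (R := ℚ) (Finset.card _), hcard]
  have hx1 := Nat.le_ceil x
  have hx2 := Nat.ceil_lt_add_one hx0
  have hy1 := Nat.le_ceil y
  have hy2 := Nat.ceil_lt_add_one hy0
  set A : ℚ := ((⌈x⌉₊ : ℕ) : ℚ)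
  set B : ℚ := ((⌈y⌉₊ : ℕ) : ℚ)
  have hA1 := Int.le_ceil ((A - c) / m)
  have hA2 := Int.ceil_lt_add_one ((A - c) / m)
  have hB1 := Int.le_ceil ((B - c) / m)
  have hB2 := Int.ceil_lt_add_one ((B - c) / m)
  have hd : (B - c) / m - (A - c) / m = (B - A) / m := by ring
  have hd1 : (B - A) / m ≤ q / G + 1 := by
    rw [div_le_iff₀ hm0]
    linarith
  have hd2 : q / G - 1 ≤ (B - A) / m := by
    rw [le_div_iff₀ hm0]
    linarith
  have hq0 : (0 : ℚ) ≤ q / G := by positivity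
  push_cast
  rw [abs_le]
  constructor
  · have := le_max_left ((⌈(B - c) / m⌉ : ℚ) - ⌈(A - c) / m⌉) 0
    linarith
  · rw [sub_le_iff_le_add]
    exact max_le (by linarith) (by linarith)

theorem abs_nu_div_ordg_sub_le {g b a j K : ℕ} (hg : 0 < g) (hb : 0 < b)
    (hgb : Nat.Coprime g b) (hab : Nat.Coprime a b) {s : ℕ} (hs : s < g ^ j) {l : ℕ}
    (hK : ordg g (b ^ (K + l)) = b ^ l * ordg g (b ^ K)) :
    |(nu g b a j (K + l) s : ℝ) / (ordg g (b ^ (K + l)) : ℝ) - 1 / (g : ℝ) ^ j| ≤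
      2 / (b : ℝ) ^ l := by
  have hm := pow_pos hb K
  have hq := pow_pos hb l
  have hN := ordg_pos hm (hgb.pow_right K)
  have hnu : (nu g b a j (K + l) s : ℝ) = ∑ c ∈ powResidues g a (b ^ K),
      ((((Finset.range (b ^ K * b ^ l)).filter
        fun r => r % b ^ K = c ∧ g ^ j * r / (b ^ K * b ^ l) = s).card : ℕ) : ℝ) := by
    rw [nu_eq_card_filter_powResidues hg hb hgb hab, pow_add, powResidues_mul_eq hm hq
      (pow_add b K l ▸ hgb.pow_right _) (pow_add b K l ▸ hab.pow_right _) (pow_add b K l ▸ hK),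
      Finset.card_eq_sum_card_fiberwise (f := fun r => r % b ^ K) (t := powResidues g a (b ^ K)) ?_]
    swap
    · exact fun r hr => (Finset.mem_filter.1 (Finset.mem_filter.1 hr).1).2
    push_cast
    refine Finset.sum_congr rfl fun c hc => ?_
    congr 2
    ext r
    simp only [Finset.mem_filter]
    constructor
    · tauto
    · rintro ⟨h1, rfl, h2⟩
      exact ⟨⟨⟨h1, hc⟩, h2⟩, rfl⟩
  have hsum : |(nu g b a j (K + l) s : ℝ) - ordg g (b ^ K) * ((b : ℝ) ^ l / (g : ℝ) ^ j)| ≤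
      ordg g (b ^ K) * 2 := by
    rw [hnu, ← card_powResidues (a := a) hm (hgb.pow_right K) (hab.pow_right K), ← nsmul_eq_mul,
      ← Finset.sum_const, ← Finset.sum_sub_distrib, ← nsmul_eq_mul, ← Finset.sum_const]
    refine (Finset.abs_sum_le_sum_abs _ _).trans (Finset.sum_le_sum fun c hc => ?_)
    have hcm : c < b ^ K := by
      obtain ⟨i, -, rfl⟩ := Finset.mem_image.1 hc
      exact Nat.mod_lt _ hm
    have h := abs_card_filter_mod_sub_le hm hq (pow_pos hg j) hcm hs
    have h' := (Rat.cast_le (K := ℝ)).2 h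
    push_cast at h'
    exact h'
  have hN' : (0 : ℝ) < ordg g (b ^ K) := by exact_mod_cast hN
  have hb' : (0 : ℝ) < b := by exact_mod_cast hb
  have hg' : (0 : ℝ) < g := by exact_mod_cast hg
  have hD : (0 : ℝ) < (b : ℝ) ^ l * ordg g (b ^ K) := by positivity
  rw [hK]
  push_cast
  have e : (nu g b a j (K + l) s : ℝ) / ((b : ℝ) ^ l * ordg g (b ^ K)) - 1 / (g : ℝ) ^ j =
      ((nu g b a j (K + l) s : ℝ) - ordg g (b ^ K) * ((b : ℝ) ^ l / (g : ℝ) ^ j)) /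
        ((b : ℝ) ^ l * ordg g (b ^ K)) := by
    field_simp
  rw [e, abs_div, abs_of_pos hD, div_le_iff₀ hD]
  refine hsum.trans_eq ?_
  field_simp

/-- For every `j`-word `s < g^j`, the relative frequency
`ν_k(s)/ord_g(b^k)` of `s` in the enlarged repetend of `a/b^k` converges to `1/g^j`
as `k → ∞`. -/
theorem relative_frequency_tendsto (g b a j : ℕ) (hg : 2 ≤ g) (hb : 1 < b)
    (hbg : Nat.gcd b g = 1) (ha : 0 < a) (hab : Nat.gcd a b = 1) (hj : 1 ≤ j) :
    ∀ s : ℕ, s < g ^ j →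
      Filter.Tendsto (fun k : ℕ => (nu g b a j k s : ℝ) / (ordg g (b ^ k) : ℝ))
        Filter.atTop (nhds (1 / (g : ℝ) ^ j)) := by
  intro s hs
  have hgb : Nat.Coprime g b := Nat.Coprime.symm hbg
  obtain ⟨K, hK⟩ := exists_ordg_pow_add_eq hg hb hgb
  rw [← Filter.tendsto_add_atTop_iff_nat K, tendsto_iff_dist_tendsto_zero]
  refine squeeze_zero (fun _ => dist_nonneg) (fun l => ?_)
    ((tendsto_pow_atTop_atTop_of_one_lt (r := (b : ℝ))
      (by exact_mod_cast hb)).const_div_atTop 2)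
  rw [Real.dist_eq, add_comm l K]
  exact abs_nu_div_ordg_sub_le (by omega) (by omega) hgb hab hs (hK l)
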